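/- Let G̃ and G be groups, π : G̃ → G a surjective group homomorphism whose kernel K is contained in the center of G̃, F̃ : G̃ → G̃ a group homomorphism with F̃(K) ⊆ K, and F : G → G a group homomorphism with F ∘ π = π ∘ F̃. Assume the Lang map of G̃ is surjective, i.e. for every x ∈ G̃ there exists z ∈ G̃ with x = z^{−1}·F̃(z). Define 𝓛(K) = { z^{−1}·F̃(z) : z ∈ K }, a subgroup of K. Then the assignment sending g ∈ G^F to the coset (g̃^{−1}·F̃(g̃))·𝓛(K), for any choice of g̃ ∈ G̃ with π(g̃) = g, is a well-defined surjective group homomorphism G^F → K/𝓛(K) whose kernel is π(G̃^{F̃}); consequently it induces a group isomorphism G^F / π(G̃^{F̃}) ≅ K / 𝓛(K). -/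

import Mathlib

/-- The fixed-point subgroup `G^F = { g : G | F g = g }` of a group endomorphism `F`. -/
def fixedSubgroup {G : Type*} [Group G] (F : G →* G) : Subgroup G where
  carrier := {g : G | F g = g}
  one_mem' := map_one F
  mul_mem' := by
    intro a b ha hb
    show F (a * b) = a * b
    rw [map_mul, ha, hb]
  inv_mem' := by
    intro a ha
    show F a⁻¹ = a⁻¹
    rw [map_inv]
    exact congrArg Inv.inv ha

/-- `𝓛(K) = { z⁻¹·F̃(z) : z ∈ K }` where `K = ker π`; it is a subgroup of `G̃` since
`K` is central. -/
def langSubgroup {Gt G : Type*} [Group Gt] [Group G] (π : Gt →* G) (Ft : Gt →* Gt)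
    (hker : π.ker ≤ Subgroup.center Gt) : Subgroup Gt where
  carrier := {w : Gt | ∃ z ∈ π.ker, w = z⁻¹ * Ft z}
  one_mem' := ⟨1, π.ker.one_mem, by simp⟩
  mul_mem' := by
    intro x y hx hy
    obtain ⟨a, ha, rfl⟩ := hx
    obtain ⟨b, hb, rfl⟩ := hy
    refine ⟨a * b, π.ker.mul_mem ha hb, ?_⟩
    have h1 : Ft a * b⁻¹ = b⁻¹ * Ft a :=
      Subgroup.mem_center_iff.mp (hker (π.ker.inv_mem hb)) (Ft a)
    have h2 : a⁻¹ * b⁻¹ = b⁻¹ * a⁻¹ :=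
      Subgroup.mem_center_iff.mp (hker (π.ker.inv_mem hb)) a⁻¹
    calc a⁻¹ * Ft a * (b⁻¹ * Ft b)
        = a⁻¹ * (Ft a * b⁻¹) * Ft b := by group
      _ = a⁻¹ * (b⁻¹ * Ft a) * Ft b := by rw [h1]
      _ = a⁻¹ * b⁻¹ * (Ft a * Ft b) := by group
      _ = b⁻¹ * a⁻¹ * (Ft a * Ft b) := by rw [h2]
      _ = (a * b)⁻¹ * Ft (a * b) := by rw [map_mul, mul_inv_rev]
  inv_mem' := by
    intro x hx
    obtain ⟨z, hz, rfl⟩ := hx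
    refine ⟨z⁻¹, π.ker.inv_mem hz, ?_⟩
    have h1 : (Ft z)⁻¹ * z = z * (Ft z)⁻¹ :=
      Subgroup.mem_center_iff.mp (hker hz) (Ft z)⁻¹
    calc (z⁻¹ * Ft z)⁻¹ = (Ft z)⁻¹ * z := by group
      _ = z * (Ft z)⁻¹ := h1
      _ = (z⁻¹)⁻¹ * Ft z⁻¹ := by rw [inv_inv, map_inv]

/-- `𝓛(K)` is a normal subgroup of `K = ker π` (everything is central). -/
theorem langSubgroup_subgroupOf_normal {Gt G : Type*} [Group Gt] [Group G]
    (π : Gt →* G) (Ft : Gt →* Gt) (hker : π.ker ≤ Subgroup.center Gt) :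
    ((langSubgroup π Ft hker).subgroupOf π.ker).Normal := by
  constructor
  intro n hn g
  have hc : (g : Gt) * (n : Gt) = (n : Gt) * (g : Gt) :=
    Subgroup.mem_center_iff.mp (hker n.2) g
  have hgn : g * n * g⁻¹ = n := by
    apply Subtype.ext
    push_cast
    rw [hc]
    group
  rwa [hgn]

/-- Lemma `lemma:finfactor`: with `π : G̃ → G` surjective with central kernel
`K`, `F̃(K) ⊆ K`, `F ∘ π = π ∘ F̃`, and the Lang map of `G̃` surjective, the assignment
`g ↦ (g̃⁻¹·F̃(g̃))·𝓛(K)` is a well-defined surjective homomorphism `G^F → K/𝓛(K)` with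
kernel `π(G̃^{F̃})`, inducing `G^F / π(G̃^{F̃}) ≅ K / 𝓛(K)`. -/
theorem statement16 {Gt G : Type*} [Group Gt] [Group G] (π : Gt →* G)
    (hsurj : Function.Surjective π) (hker : π.ker ≤ Subgroup.center Gt)
    (Ft : Gt →* Gt) (hFtK : ∀ z ∈ π.ker, Ft z ∈ π.ker)
    (F : G →* G) (hcomm : ∀ x : Gt, F (π x) = π (Ft x))
    (hLang : ∀ x : Gt, ∃ z : Gt, x = z⁻¹ * Ft z) :
    letI := langSubgroup_subgroupOf_normal π Ft hker
    ∃ φ : fixedSubgroup F →* (π.ker ⧸ (langSubgroup π Ft hker).subgroupOf π.ker),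
      (∀ (g : fixedSubgroup F) (gt : Gt) (_ : π gt = (g : G))
          (hmem : gt⁻¹ * Ft gt ∈ π.ker),
        φ g = QuotientGroup.mk ⟨gt⁻¹ * Ft gt, hmem⟩) ∧
      Function.Surjective φ ∧
      φ.ker = ((fixedSubgroup Ft).map π).subgroupOf (fixedSubgroup F) ∧
      ∀ [_h : (((fixedSubgroup Ft).map π).subgroupOf (fixedSubgroup F)).Normal],
        Nonempty
          ((fixedSubgroup F ⧸ ((fixedSubgroup Ft).map π).subgroupOf (fixedSubgroup F)) ≃*
            (π.ker ⧸ (langSubgroup π Ft hker).subgroupOf π.ker)) := by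
  letI := langSubgroup_subgroupOf_normal π Ft hker
  have hK : ∀ (g : fixedSubgroup F) (a : Gt), π a = (g : G) → a⁻¹ * Ft a ∈ π.ker := by
    intro g a ha
    have hg : F (g : G) = g := g.2
    rw [MonoidHom.mem_ker, map_mul, map_inv, ← hcomm, ha, hg, inv_mul_cancel]
  have key : ∀ a b : Gt, a⁻¹ * Ft a ∈ π.ker →
      (a * b)⁻¹ * Ft (a * b) = (a⁻¹ * Ft a) * (b⁻¹ * Ft b) := by
    intro a b h
    have h1 : b⁻¹ * (a⁻¹ * Ft a) = (a⁻¹ * Ft a) * b⁻¹ :=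
      Subgroup.mem_center_iff.mp (hker h) b⁻¹
    calc (a * b)⁻¹ * Ft (a * b) = (b⁻¹ * (a⁻¹ * Ft a)) * Ft b := by
          rw [map_mul]; group
      _ = (a⁻¹ * Ft a) * (b⁻¹ * Ft b) := by rw [h1]; group
  have wd : ∀ (a b : Gt) (ha : a⁻¹ * Ft a ∈ π.ker) (hb : b⁻¹ * Ft b ∈ π.ker), π a = π b →
      (QuotientGroup.mk ⟨a⁻¹ * Ft a, ha⟩ :
        π.ker ⧸ (langSubgroup π Ft hker).subgroupOf π.ker) =
        QuotientGroup.mk ⟨b⁻¹ * Ft b, hb⟩ := by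
    intro a b ha hb hab
    rw [QuotientGroup.eq, Subgroup.mem_subgroupOf]
    refine ⟨a⁻¹ * b, ?_, ?_⟩
    · rw [MonoidHom.mem_ker, map_mul, map_inv, hab, inv_mul_cancel]
    · have h := key a (a⁻¹ * b) ha
      rw [mul_inv_cancel_left] at h
      show (a⁻¹ * Ft a)⁻¹ * (b⁻¹ * Ft b) = _
      rw [h, inv_mul_cancel_left]
  choose s hs using hsurj
  let φ : fixedSubgroup F →* (π.ker ⧸ (langSubgroup π Ft hker).subgroupOf π.ker) :=
    MonoidHom.mk' (fun g => QuotientGroup.mk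
      ⟨(s (g : G))⁻¹ * Ft (s (g : G)), hK g _ (hs _)⟩) (by
        intro g h
        have hπ : π (s (g : G) * s (h : G)) = ((g * h : fixedSubgroup F) : G) := by
          rw [map_mul, hs, hs]; rfl
        rw [wd _ (s (g : G) * s (h : G)) _ (hK (g * h) _ hπ) ((hs _).trans hπ.symm),
          ← QuotientGroup.mk_mul]
        congr 1
        exact Subtype.ext (key _ _ (hK g _ (hs _))))
  have hφ : ∀ (g : fixedSubgroup F) (gt : Gt) (_ : π gt = (g : G))
      (hmem : gt⁻¹ * Ft gt ∈ π.ker), φ g = QuotientGroup.mk ⟨gt⁻¹ * Ft gt, hmem⟩ := by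
    intro g a ha hmem
    exact wd _ _ _ _ ((hs _).trans ha.symm)
  have hφs : Function.Surjective φ := by
    intro q
    obtain ⟨⟨k, hk⟩, rfl⟩ := QuotientGroup.mk_surjective q
    obtain ⟨z, rfl⟩ := hLang k
    have hz : π z ∈ fixedSubgroup F := by
      show F (π z) = π z
      rw [MonoidHom.mem_ker, map_mul, map_inv, inv_mul_eq_one] at hk
      rw [hcomm, hk]
    exact ⟨⟨π z, hz⟩, hφ ⟨π z, hz⟩ z rfl hk⟩
  have hφk : φ.ker = ((fixedSubgroup Ft).map π).subgroupOf (fixedSubgroup F) := by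
    ext g
    rw [MonoidHom.mem_ker, Subgroup.mem_subgroupOf, Subgroup.mem_map]
    constructor
    · intro h
      rw [hφ g _ (hs _) (hK g _ (hs _)), QuotientGroup.eq_one_iff,
        Subgroup.mem_subgroupOf] at h
      obtain ⟨z, hz, h⟩ := h
      change (s (g : G))⁻¹ * Ft (s (g : G)) = z⁻¹ * Ft z at h
      have hzc : z * Ft z = Ft z * z :=
        (Subgroup.mem_center_iff.mp (hker hz) (Ft z)).symm
      refine ⟨s (g : G) * z⁻¹, ?_, ?_⟩
      · show Ft (s (g : G) * z⁻¹) = s (g : G) * z⁻¹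
        rw [inv_mul_eq_iff_eq_mul] at h
        rw [map_mul, map_inv, h]
        group
      · rw [MonoidHom.mem_ker] at hz
        rw [map_mul, map_inv, hz, hs, inv_one, mul_one]
    · rintro ⟨x, hx, hxg⟩
      have hx' : Ft x = x := hx
      rw [hφ g x hxg (hK g x hxg), QuotientGroup.eq_one_iff, Subgroup.mem_subgroupOf]
      show x⁻¹ * Ft x ∈ _
      rw [hx', inv_mul_cancel]
      exact one_mem _
  refine ⟨φ, hφ, hφs, hφk, ?_⟩
  intro _h
  exact ⟨(QuotientGroup.quotientMulEquivOfEq hφk.symm).trans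
    (QuotientGroup.quotientKerEquivOfSurjective φ hφs)⟩
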